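/- (Saddle structure of the unconstrained Bethe free energy.) Let ρ ∈ [0,1], Δ > 0, F ∈ ℝ^{M×N}, y ∈ ℝ^M, and let (R,Σ,a,c) satisfy Σ_i > 0, c_i ≥ 0, a_i = f_a(R_i,Σ_i), c_i = f_c(R_i,Σ_i), and 1/Σ_i² = ∑_μ F_{μi}²/(Δ + V_μ) where V_μ = ∑_j F_{μj}² c_j, for all i. Then for every i the unconstrained Bethe free energy F_B satisfies: the second partial derivative in a_i equals ∑_μ F_{μi}²/Δ − 1/Σ_i² ≥ 0; the second partial derivative in c_i equals −∑_μ F_{μi}⁴/(2(Δ + V_μ)²) ≤ 0; and the second partial derivative in R_i equals −f_c(R_i,Σ_i)/Σ_i⁴ ≤ 0. -/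

import Mathlib

open MeasureTheory ProbabilityTheory

/-- The prior `P₀ = ρ·N(0,1) + (1-ρ)·δ₀`. -/
noncomputable def P0 (ρ : ℝ) : Measure ℝ :=
  ENNReal.ofReal ρ • gaussianReal 0 1 + ENNReal.ofReal (1 - ρ) • Measure.dirac 0

/-- Partition function `Z(R,Σ) = ∫ exp(-(x-R)²/(2Σ²)) dP₀(x)`. -/
noncomputable def Zpart (ρ R σ : ℝ) : ℝ :=
  ∫ x, Real.exp (-(x - R) ^ 2 / (2 * σ ^ 2)) ∂(P0 ρ)

/-- Posterior mean `f_a(R,Σ)`. -/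
noncomputable def fa (ρ R σ : ℝ) : ℝ :=
  (Zpart ρ R σ)⁻¹ * ∫ x, x * Real.exp (-(x - R) ^ 2 / (2 * σ ^ 2)) ∂(P0 ρ)

/-- Posterior variance `f_c(R,Σ)`. -/
noncomputable def fc (ρ R σ : ℝ) : ℝ :=
  (Zpart ρ R σ)⁻¹ * (∫ x, x ^ 2 * Real.exp (-(x - R) ^ 2 / (2 * σ ^ 2)) ∂(P0 ρ))
    - fa ρ R σ ^ 2

/-- The (unconstrained) Bethe free energy `F_B(R,Σ,a,c)`. -/
noncomputable def FB (ρ : ℝ) {M N : ℕ} (F : Fin M → Fin N → ℝ) (y : Fin M → ℝ)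
    (Δ : ℝ) (R Sv a c : Fin N → ℝ) : ℝ :=
  1 / (2 * Δ) * ∑ μ, (y μ - ∑ i, F μ i * a i) ^ 2
    + (M : ℝ) / 2 * Real.log (2 * Real.pi * Δ)
    + 1 / 2 * ∑ μ, Real.log (1 + (∑ i, F μ i ^ 2 * c i) / Δ)
    - ∑ i, (Real.log (Zpart ρ (R i) (Sv i)) + (c i + (a i - R i) ^ 2) / (2 * Sv i ^ 2))

/-!
Moving the observation `R` of a Gaussian channel tilts the posterior exponentially, because
`exp (-(x - R)² / (2σ²))` equals `exp (-x² / (2σ²)) * exp (R x / σ²)` up to a factor free of `x`.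
Hence `log Z` is, up to a quadratic term, a cumulant generating function at `R / σ²`; the weight
`exp (-x² / (2σ²))` makes it analytic for every prior. So `∂ log Z / ∂R = (f_a - R) / σ²` and
`∂f_a / ∂R = f_c / σ²`, the gradient of the free energy is explicit, and differentiating it once
more gives the three second derivatives. The one in `R_i` has a sign because `f_c` is a variance;
the one in `a_i` because `V_μ ≥ 0` in the fixed point equation gives `1 / Σ_i² ≤ ∑_μ F_{μi}² / Δ`.
-/

section Calculus

variable {𝕜 E : Type*} [NontriviallyNormedField 𝕜] [NormedAddCommGroup E] [NormedSpace 𝕜 E]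

lemma iteratedDeriv_two_eq_of_hasDerivAt {f f' : 𝕜 → E} {f'' : E} {x : 𝕜}
    (hf : ∀ᶠ t in nhds x, HasDerivAt f (f' t) t) (hf' : HasDerivAt f' f'' x) :
    iteratedDeriv 2 f x = f'' := by
  have hderiv : deriv f =ᶠ[nhds x] f' := hf.mono fun _ ht => ht.deriv
  rw [iteratedDeriv_succ, iteratedDeriv_one, hderiv.deriv_eq, hf'.deriv]

variable {ι : Type*} [Fintype ι] [DecidableEq ι]

lemma hasDerivAt_sum_update {g : ι → 𝕜 → E} {g' : E} {i : ι} {t : 𝕜} (v : ι → 𝕜)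
    (hg : HasDerivAt (g i) g' t) :
    HasDerivAt (fun s => ∑ j, g j (Function.update v i s j)) g' t := by
  have hsplit (s : 𝕜) : ∑ j, g j (Function.update v i s j)
      = g i s + ∑ j ∈ Finset.univ.erase i, g j (v j) := by
    rw [← Finset.add_sum_erase _ _ (Finset.mem_univ i), Function.update_self]
    congr 1
    refine Finset.sum_congr rfl fun j hj => ?_
    rw [Function.update_of_ne (Finset.ne_of_mem_erase hj)]
  simp only [hsplit]
  exact hg.add_const _

lemma hasDerivAt_sum_mul_update (w v : ι → 𝕜) (i : ι) (t : 𝕜) :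
    HasDerivAt (fun s => ∑ j, w j * Function.update v i s j) (w i) t :=
  hasDerivAt_sum_update (g := fun j s => w j * s) v (hasDerivAt_const_mul (w i))

end Calculus

section GaussianPosterior

/-- The evidence of the observation `R` of a signal with law `P` through a Gaussian channel of
standard deviation `σ`, without the normalization of the Gaussian density; `Zpart` is the case of
the prior `P0`. -/
noncomputable def gaussianPartition (P : Measure ℝ) (R σ : ℝ) : ℝ :=
  ∫ x, Real.exp (-(x - R) ^ 2 / (2 * σ ^ 2)) ∂P

/-- The posterior law of a signal with prior law `P` given its observation `R` through a Gaussian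
channel of standard deviation `σ`; its mean and variance generalize `fa` and `fc`. -/
noncomputable def gaussianPosterior (P : Measure ℝ) (R σ : ℝ) : Measure ℝ :=
  P.tilted fun x => -(x - R) ^ 2 / (2 * σ ^ 2)

variable (P : Measure ℝ)

lemma integral_gaussianPosterior (R σ : ℝ) (g : ℝ → ℝ) :
    ∫ x, g x ∂gaussianPosterior P R σ
      = (gaussianPartition P R σ)⁻¹ * ∫ x, g x * Real.exp (-(x - R) ^ 2 / (2 * σ ^ 2)) ∂P := by
  rw [gaussianPosterior, integral_tilted, ← integral_const_mul, ← gaussianPartition]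
  congr 1 with x
  rw [smul_eq_mul]
  ring

variable [IsFiniteMeasure P]

lemma integrable_exp_neg_sub_sq_div (R σ : ℝ) :
    Integrable (fun x => Real.exp (-(x - R) ^ 2 / (2 * σ ^ 2))) P := by
  refine Integrable.of_bound (by fun_prop) 1 (Filter.Eventually.of_forall fun x => ?_)
  rw [Real.norm_of_nonneg (Real.exp_pos _).le, Real.exp_le_one_iff, neg_div]
  exact neg_nonpos.mpr (by positivity)

lemma integrableExpSet_gaussianPosterior_zero {σ : ℝ} (hσ : σ ≠ 0) :
    integrableExpSet id (gaussianPosterior P 0 σ) = Set.univ := by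
  refine Set.eq_univ_of_forall fun t => ?_
  have hsquare (x : ℝ) : -(x - 0) ^ 2 / (2 * σ ^ 2) + t * x
      = σ ^ 2 * t ^ 2 / 2 + -(x - σ ^ 2 * t) ^ 2 / (2 * σ ^ 2) := by
    field_simp
    ring
  change Integrable (fun x => Real.exp (t * id x)) (P.tilted _)
  rw [integrable_tilted_iff (integrable_exp_neg_sub_sq_div P 0 σ)]
  simp only [id, smul_eq_mul, ← Real.exp_add, hsquare]
  simp only [Real.exp_add]
  exact (integrable_exp_neg_sub_sq_div P (σ ^ 2 * t) σ).const_mul _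

lemma mem_interior_integrableExpSet_gaussianPosterior_zero {σ : ℝ} (hσ : σ ≠ 0) (t : ℝ) :
    t ∈ interior (integrableExpSet id (gaussianPosterior P 0 σ)) := by
  simp only [integrableExpSet_gaussianPosterior_zero P hσ, interior_univ, Set.mem_univ]

lemma analyticAt_cgf_gaussianPosterior_zero {σ : ℝ} (hσ : σ ≠ 0) (t : ℝ) :
    AnalyticAt ℝ (cgf id (gaussianPosterior P 0 σ)) t :=
  analyticAt_cgf (mem_interior_integrableExpSet_gaussianPosterior_zero P hσ t)

variable [NeZero P]

instance isProbabilityMeasure_gaussianPosterior (R σ : ℝ) :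
    IsProbabilityMeasure (gaussianPosterior P R σ) :=
  isProbabilityMeasure_tilted (integrable_exp_neg_sub_sq_div P R σ)

lemma gaussianPosterior_eq_tilted (R σ : ℝ) :
    gaussianPosterior P R σ = (gaussianPosterior P 0 σ).tilted (R / σ ^ 2 * id ·) := by
  have hexp : (fun x : ℝ => -(x - 0) ^ 2 / (2 * σ ^ 2)) + (R / σ ^ 2 * id ·)
      = (fun x => -(x - R) ^ 2 / (2 * σ ^ 2)) + fun _ => R ^ 2 / (2 * σ ^ 2) := by
    ext x
    simp only [Pi.add_apply, id]
    ring
  calc gaussianPosterior P R σ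
      = (gaussianPosterior P R σ).tilted fun _ => R ^ 2 / (2 * σ ^ 2) := (tilted_const _ _).symm
    _ = P.tilted ((fun x => -(x - 0) ^ 2 / (2 * σ ^ 2)) + (R / σ ^ 2 * id ·)) := by
        rw [gaussianPosterior, tilted_tilted (integrable_exp_neg_sub_sq_div P R σ), hexp]
    _ = (gaussianPosterior P 0 σ).tilted (R / σ ^ 2 * id ·) :=
        (tilted_tilted (integrable_exp_neg_sub_sq_div P 0 σ) _).symm

lemma gaussianPartition_pos (R σ : ℝ) : 0 < gaussianPartition P R σ :=
  integral_exp_pos (integrable_exp_neg_sub_sq_div P R σ)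

lemma log_gaussianPartition (R σ : ℝ) :
    Real.log (gaussianPartition P R σ)
      = Real.log (gaussianPartition P 0 σ) + cgf id (gaussianPosterior P 0 σ) (R / σ ^ 2)
        - R ^ 2 / (2 * σ ^ 2) := by
  have hexp (x : ℝ) : -(x - 0) ^ 2 / (2 * σ ^ 2) + R / σ ^ 2 * x
      = R ^ 2 / (2 * σ ^ 2) + -(x - R) ^ 2 / (2 * σ ^ 2) := by ring
  have hmgf : mgf id (gaussianPosterior P 0 σ) (R / σ ^ 2)
      = Real.exp (R ^ 2 / (2 * σ ^ 2)) * gaussianPartition P R σ / gaussianPartition P 0 σ := by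
    simp only [mgf, gaussianPosterior, integral_exp_tilted, Pi.add_apply, id, hexp, Real.exp_add,
      integral_const_mul, gaussianPartition]
  rw [cgf, hmgf, Real.log_div (mul_pos (Real.exp_pos _) (gaussianPartition_pos P R σ)).ne'
    (gaussianPartition_pos P 0 σ).ne', Real.log_mul (Real.exp_ne_zero _)
    (gaussianPartition_pos P R σ).ne', Real.log_exp]
  ring

lemma memLp_id_gaussianPosterior (R : ℝ) {σ : ℝ} (hσ : σ ≠ 0) (p : NNReal) :
    MemLp id p (gaussianPosterior P R σ) := by
  rw [gaussianPosterior_eq_tilted]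
  exact memLp_tilted_mul (mem_interior_integrableExpSet_gaussianPosterior_zero P hσ _) p

lemma mean_gaussianPosterior (R : ℝ) {σ : ℝ} (hσ : σ ≠ 0) :
    (gaussianPosterior P R σ)[id] = deriv (cgf id (gaussianPosterior P 0 σ)) (R / σ ^ 2) := by
  rw [gaussianPosterior_eq_tilted,
    integral_tilted_mul_self (mem_interior_integrableExpSet_gaussianPosterior_zero P hσ _)]

lemma variance_gaussianPosterior (R : ℝ) {σ : ℝ} (hσ : σ ≠ 0) :
    Var[id; gaussianPosterior P R σ]
      = deriv (deriv (cgf id (gaussianPosterior P 0 σ))) (R / σ ^ 2) := by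
  rw [gaussianPosterior_eq_tilted,
    variance_tilted_mul (mem_interior_integrableExpSet_gaussianPosterior_zero P hσ _),
    iteratedDeriv_succ, iteratedDeriv_one]

lemma hasDerivAt_log_gaussianPartition (R : ℝ) {σ : ℝ} (hσ : σ ≠ 0) :
    HasDerivAt (fun S => Real.log (gaussianPartition P S σ))
      (((gaussianPosterior P R σ)[id] - R) / σ ^ 2) R := by
  have hcgf := (analyticAt_cgf_gaussianPosterior_zero P hσ
    (R / σ ^ 2)).differentiableAt.hasDerivAt.comp R ((hasDerivAt_id R).div_const (σ ^ 2))
  have hsq := (hasDerivAt_pow 2 R).div_const (2 * σ ^ 2)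
  rw [funext fun S => log_gaussianPartition P S σ, mean_gaussianPosterior P R hσ]
  refine ((hcgf.const_add _).sub hsq).congr_deriv ?_
  push_cast
  ring

lemma hasDerivAt_mean_gaussianPosterior (R : ℝ) {σ : ℝ} (hσ : σ ≠ 0) :
    HasDerivAt (fun S => (gaussianPosterior P S σ)[id])
      (Var[id; gaussianPosterior P R σ] / σ ^ 2) R := by
  rw [funext fun S => mean_gaussianPosterior P S hσ, variance_gaussianPosterior P R hσ]
  exact ((analyticAt_cgf_gaussianPosterior_zero P hσ _).deriv.differentiableAt.hasDerivAt.comp R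
    ((hasDerivAt_id R).div_const (σ ^ 2))).congr_deriv (by
      simp only [id]
      ring)

end GaussianPosterior

section BetheFreeEnergy

variable {ι κ : Type*} [Fintype ι] [Fintype κ]

/-- The unconstrained Bethe free energy of the linear model `y = F x + noise` with noise variance
`Δ` and an arbitrary prior `P` on the coordinates of `x`; `FB` is the case of the prior `P0`. -/
noncomputable def betheFreeEnergy (P : Measure ℝ) (F : ι → κ → ℝ) (y : ι → ℝ) (Δ : ℝ)
    (R Sv a c : κ → ℝ) : ℝ :=
  1 / (2 * Δ) * ∑ μ, (y μ - ∑ i, F μ i * a i) ^ 2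
    + (Fintype.card ι : ℝ) / 2 * Real.log (2 * Real.pi * Δ)
    + 1 / 2 * ∑ μ, Real.log (1 + (∑ i, F μ i ^ 2 * c i) / Δ)
    - ∑ i, (Real.log (gaussianPartition P (R i) (Sv i))
      + (c i + (a i - R i) ^ 2) / (2 * Sv i ^ 2))

variable [DecidableEq κ] (P : Measure ℝ) (F : ι → κ → ℝ) (y : ι → ℝ) (R Sv a c : κ → ℝ) (i : κ)

lemma hasDerivAt_betheFreeEnergy_update_a (Δ t : ℝ) :
    HasDerivAt (fun s => betheFreeEnergy P F y Δ R Sv (Function.update a i s) c)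
      (-(∑ μ, F μ i * (y μ - ∑ j, F μ j * Function.update a i t j)) / Δ
        - (t - R i) / Sv i ^ 2) t := by
  have hfit := HasDerivAt.fun_sum (u := Finset.univ) fun μ _ =>
    ((hasDerivAt_sum_mul_update (F μ) a i t).const_sub (y μ)).pow 2
  have hlocal := hasDerivAt_sum_update (i := i) (t := t)
    (g := fun j s => Real.log (gaussianPartition P (R j) (Sv j))
      + (c j + (s - R j) ^ 2) / (2 * Sv j ^ 2)) a
    ((((((hasDerivAt_id t).sub_const (R i)).pow 2).const_add (c i)).div_const _).const_add _)
  refine ((((hfit.const_mul (1 / (2 * Δ))).add_const _).add_const _).sub hlocal).congr_deriv ?_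
  simp only [Finset.mul_sum, Finset.sum_div, ← Finset.sum_neg_distrib, id]
  congr 1
  · exact Finset.sum_congr rfl fun μ _ => by ring
  · ring

lemma hasDerivAt_betheFreeEnergy_update_c {Δ : ℝ} (hΔ : Δ ≠ 0) {t : ℝ}
    (hV : ∀ μ, Δ + ∑ j, F μ j ^ 2 * Function.update c i t j ≠ 0) :
    HasDerivAt (fun s => betheFreeEnergy P F y Δ R Sv a (Function.update c i s))
      (1 / 2 * ∑ μ, F μ i ^ 2 / (Δ + ∑ j, F μ j ^ 2 * Function.update c i t j)
        - 1 / (2 * Sv i ^ 2)) t := by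
  have hratio (μ : ι) : 1 + (∑ j, F μ j ^ 2 * Function.update c i t j) / Δ
      = (Δ + ∑ j, F μ j ^ 2 * Function.update c i t j) / Δ := by
    rw [add_div, div_self hΔ]
  have hlog := HasDerivAt.fun_sum (u := Finset.univ) fun μ _ =>
    (((hasDerivAt_sum_mul_update (F μ · ^ 2) c i t).div_const Δ).const_add 1).log
      (hratio μ ▸ div_ne_zero (hV μ) hΔ)
  have hlocal := hasDerivAt_sum_update (i := i) (t := t)
    (g := fun j s => Real.log (gaussianPartition P (R j) (Sv j))
      + (s + (a j - R j) ^ 2) / (2 * Sv j ^ 2)) c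
    ((((hasDerivAt_id t).add_const _).div_const _).const_add _)
  refine (((hlog.const_mul (1 / 2)).const_add _).sub hlocal).congr_deriv ?_
  simp only [hratio, div_div_div_cancel_right₀ hΔ]

lemma hasDerivAt_betheFreeEnergy_update_R [IsFiniteMeasure P] [NeZero P] (hS : Sv i ≠ 0)
    (Δ t : ℝ) :
    HasDerivAt (fun s => betheFreeEnergy P F y Δ (Function.update R i s) Sv a c)
      ((a i - (gaussianPosterior P t (Sv i))[id]) / Sv i ^ 2) t := by
  have hlocal := hasDerivAt_sum_update (i := i) (t := t)
    (g := fun j s => Real.log (gaussianPartition P s (Sv j))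
      + (c j + (a j - s) ^ 2) / (2 * Sv j ^ 2)) R
    ((hasDerivAt_log_gaussianPartition P t hS).add
      (((((hasDerivAt_id t).const_sub (a i)).pow 2).const_add (c i)).div_const _))
  refine (hlocal.const_sub _).congr_deriv ?_
  simp only [id]
  field_simp
  ring

lemma iteratedDeriv_two_betheFreeEnergy_update_a (Δ t : ℝ) :
    iteratedDeriv 2 (fun s => betheFreeEnergy P F y Δ R Sv (Function.update a i s) c) t
      = ∑ μ, F μ i ^ 2 / Δ - 1 / Sv i ^ 2 := by
  refine iteratedDeriv_two_eq_of_hasDerivAt (Filter.Eventually.of_forall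
    (hasDerivAt_betheFreeEnergy_update_a P F y R Sv a c i Δ)) ?_
  have hfit := HasDerivAt.fun_sum (u := Finset.univ) fun μ _ =>
    ((hasDerivAt_sum_mul_update (F μ) a i t).const_sub (y μ)).const_mul (F μ i)
  have hlocal := ((hasDerivAt_id t).sub_const (R i)).div_const (Sv i ^ 2)
  refine ((hfit.neg.div_const Δ).sub hlocal).congr_deriv ?_
  simp only [mul_neg, Finset.sum_neg_distrib, neg_neg, Finset.sum_div, sq]

lemma iteratedDeriv_two_betheFreeEnergy_update_c {Δ : ℝ} (hΔ : Δ ≠ 0)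
    (hV : ∀ μ, Δ + ∑ j, F μ j ^ 2 * c j ≠ 0) :
    iteratedDeriv 2 (fun s => betheFreeEnergy P F y Δ R Sv a (Function.update c i s)) (c i)
      = -∑ μ, F μ i ^ 4 / (2 * (Δ + ∑ j, F μ j ^ 2 * c j) ^ 2) := by
  have hdenom (μ : ι) := (hasDerivAt_sum_mul_update (F μ · ^ 2) c i (c i)).const_add Δ
  have hV_self (μ : ι) : Δ + ∑ j, F μ j ^ 2 * Function.update c i (c i) j ≠ 0 := by
    simpa only [Function.update_eq_self] using hV μ
  have hV_near : ∀ᶠ t in nhds (c i), ∀ μ, Δ + ∑ j, F μ j ^ 2 * Function.update c i t j ≠ 0 :=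
    Filter.eventually_all.mpr fun μ => (hdenom μ).continuousAt.eventually_ne (hV_self μ)
  refine iteratedDeriv_two_eq_of_hasDerivAt (hV_near.mono fun t ht =>
    hasDerivAt_betheFreeEnergy_update_c P F y R Sv a c i hΔ ht) ?_
  have hquot := HasDerivAt.fun_sum (u := Finset.univ) fun μ _ =>
    (hasDerivAt_const (c i) (F μ i ^ 2)).fun_div (hdenom μ) (hV_self μ)
  refine ((hquot.const_mul (1 / 2)).sub_const _).congr_deriv ?_
  simp only [Function.update_eq_self, Finset.mul_sum, ← Finset.sum_neg_distrib]
  refine Finset.sum_congr rfl fun μ _ => ?_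
  have hVμ := hV μ
  field_simp
  ring

lemma iteratedDeriv_two_betheFreeEnergy_update_R [IsFiniteMeasure P] [NeZero P]
    (hS : Sv i ≠ 0) (Δ t : ℝ) :
    iteratedDeriv 2 (fun s => betheFreeEnergy P F y Δ (Function.update R i s) Sv a c) t
      = -Var[id; gaussianPosterior P t (Sv i)] / Sv i ^ 4 := by
  refine iteratedDeriv_two_eq_of_hasDerivAt (Filter.Eventually.of_forall
    (hasDerivAt_betheFreeEnergy_update_R P F y R Sv a c i hS Δ)) ?_
  exact (((hasDerivAt_mean_gaussianPosterior P t hS).const_sub (a i)).div_const _).congr_deriv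
    (by ring)

theorem stmt11_general [IsFiniteMeasure P] [NeZero P] {Δ : ℝ} (hΔ : 0 < Δ)
    (hc0 : ∀ j, 0 ≤ c j) (hS : Sv i ≠ 0)
    (hSig : 1 / Sv i ^ 2 = ∑ μ, F μ i ^ 2 / (Δ + ∑ j, F μ j ^ 2 * c j)) :
    (iteratedDeriv 2 (fun t => betheFreeEnergy P F y Δ R Sv (Function.update a i t) c) (a i)
        = ∑ μ, F μ i ^ 2 / Δ - 1 / Sv i ^ 2 ∧
      0 ≤ ∑ μ, F μ i ^ 2 / Δ - 1 / Sv i ^ 2) ∧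
    (iteratedDeriv 2 (fun t => betheFreeEnergy P F y Δ R Sv a (Function.update c i t)) (c i)
        = -∑ μ, F μ i ^ 4 / (2 * (Δ + ∑ j, F μ j ^ 2 * c j) ^ 2) ∧
      -∑ μ, F μ i ^ 4 / (2 * (Δ + ∑ j, F μ j ^ 2 * c j) ^ 2) ≤ 0) ∧
    (iteratedDeriv 2 (fun t => betheFreeEnergy P F y Δ (Function.update R i t) Sv a c) (R i)
        = -Var[id; gaussianPosterior P (R i) (Sv i)] / Sv i ^ 4 ∧
      -Var[id; gaussianPosterior P (R i) (Sv i)] / Sv i ^ 4 ≤ 0) := by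
  have hV (μ : ι) : 0 ≤ ∑ j, F μ j ^ 2 * c j :=
    Finset.sum_nonneg fun j _ => mul_nonneg (sq_nonneg _) (hc0 j)
  refine ⟨⟨iteratedDeriv_two_betheFreeEnergy_update_a P F y R Sv a c i Δ _, ?_⟩,
    ⟨iteratedDeriv_two_betheFreeEnergy_update_c P F y R Sv a c i hΔ.ne' fun μ =>
      (add_pos_of_pos_of_nonneg hΔ (hV μ)).ne', ?_⟩,
    ⟨iteratedDeriv_two_betheFreeEnergy_update_R P F y R Sv a c i hS Δ _, ?_⟩⟩
  · rw [hSig, sub_nonneg]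
    gcongr with μ
    exact le_add_of_nonneg_right (hV μ)
  · exact neg_nonpos.mpr (Finset.sum_nonneg fun μ _ => by positivity)
  · rw [neg_div]
    exact neg_nonpos.mpr (div_nonneg (variance_nonneg _ _) (by positivity))

end BetheFreeEnergy

lemma isProbabilityMeasure_P0 {ρ : ℝ} (hρ : ρ ∈ Set.Icc (0 : ℝ) 1) :
    IsProbabilityMeasure (P0 ρ) where
  measure_univ := by
    simp [P0, ← ENNReal.ofReal_add hρ.1 (sub_nonneg.mpr hρ.2)]

lemma fc_eq_variance {ρ : ℝ} (hρ : ρ ∈ Set.Icc (0 : ℝ) 1) (R : ℝ) {σ : ℝ} (hσ : σ ≠ 0) :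
    fc ρ R σ = Var[id; gaussianPosterior (P0 ρ) R σ] := by
  have := isProbabilityMeasure_P0 hρ
  rw [variance_eq_sub (memLp_id_gaussianPosterior (P0 ρ) R hσ 2)]
  simp only [Pi.pow_apply, id, integral_gaussianPosterior]
  rfl

lemma FB_eq_betheFreeEnergy (ρ : ℝ) {M N : ℕ} (F : Fin M → Fin N → ℝ) (y : Fin M → ℝ) (Δ : ℝ)
    (R Sv a c : Fin N → ℝ) :
    FB ρ F y Δ R Sv a c = betheFreeEnergy (P0 ρ) F y Δ R Sv a c := by
  rw [betheFreeEnergy, Fintype.card_fin]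
  rfl

/-- saddle structure of the unconstrained Bethe free energy: at a point
satisfying the consistency conditions and `1/Σ_i² = ∑_μ F_{μi}²/(Δ + V_μ)`, the second
partial derivative of `F_B` in `a_i` is `∑_μ F_{μi}²/Δ − 1/Σ_i² ≥ 0`, in `c_i` is
`−∑_μ F_{μi}⁴/(2(Δ+V_μ)²) ≤ 0`, and in `R_i` is `−f_c(R_i,Σ_i)/Σ_i⁴ ≤ 0`. -/
theorem stmt11 (ρ : ℝ) (hρ : ρ ∈ Set.Icc (0 : ℝ) 1) {M N : ℕ}
    (F : Fin M → Fin N → ℝ) (y : Fin M → ℝ) (Δ : ℝ) (hΔ : 0 < Δ)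
    (R Sv a c : Fin N → ℝ) (hS : ∀ i, 0 < Sv i) (hc0 : ∀ i, 0 ≤ c i)
    (ha : ∀ i, a i = fa ρ (R i) (Sv i)) (hc : ∀ i, c i = fc ρ (R i) (Sv i))
    (hSig : ∀ i, 1 / Sv i ^ 2 = ∑ μ, F μ i ^ 2 / (Δ + ∑ j, F μ j ^ 2 * c j)) :
    ∀ i,
      (iteratedDeriv 2 (fun t => FB ρ F y Δ R Sv (Function.update a i t) c) (a i)
          = ∑ μ, F μ i ^ 2 / Δ - 1 / Sv i ^ 2 ∧
        0 ≤ ∑ μ, F μ i ^ 2 / Δ - 1 / Sv i ^ 2) ∧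
      (iteratedDeriv 2 (fun t => FB ρ F y Δ R Sv a (Function.update c i t)) (c i)
          = -∑ μ, F μ i ^ 4 / (2 * (Δ + ∑ j, F μ j ^ 2 * c j) ^ 2) ∧
        -∑ μ, F μ i ^ 4 / (2 * (Δ + ∑ j, F μ j ^ 2 * c j) ^ 2) ≤ 0) ∧
      (iteratedDeriv 2 (fun t => FB ρ F y Δ (Function.update R i t) Sv a c) (R i)
          = -(fc ρ (R i) (Sv i)) / Sv i ^ 4 ∧
        -(fc ρ (R i) (Sv i)) / Sv i ^ 4 ≤ 0) := by
  intro i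
  have := isProbabilityMeasure_P0 hρ
  simpa only [FB_eq_betheFreeEnergy, fc_eq_variance hρ _ (hS i).ne'] using
    stmt11_general (P0 ρ) F y R Sv a c i hΔ hc0 (hS i).ne' (hSig i)
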